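/- Let L be a completely distributive commutative subspace lattice on H and Φ a rank preserving linear map on Alg L. Set M_i = ⋁{E ∈ L : E is isolated}, M_c = (⋁{E ∈ L : E is consistent with respect to Φ}) ∩ M_i^⊥, and M_t = (⋁{E ∈ L : E is twisted with respect to Φ}) ∩ M_i^⊥. Then M_i, M_c, M_t are mutually orthogonal closed subspaces with M_i ⊕ M_c ⊕ M_t = H, each of M_i, M_c, M_t and each of their orthogonal complements belongs to L, and consequently every A ∈ Alg L satisfies A = P_i A P_i + P_c A P_c + P_t A P_t, where P_i, P_c, P_t are the orthogonal projections onto M_i, M_c, M_t respectively. -/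

import Mathlib

open scoped InnerProductSpace

noncomputable section

/-- The join (closed linear span) of a family of subspaces of a Hilbert space. -/
def closedJoin {H : Type*} [NormedAddCommGroup H] [InnerProductSpace ℂ H]
    (S : Set (Submodule ℂ H)) : Submodule ℂ H :=
  (sSup S).topologicalClosure

/-- A subspace lattice on `H`: a family of closed subspaces containing `{0}` and `H`,
closed under arbitrary intersections and arbitrary closed linear spans. -/
structure IsSubspaceLattice {H : Type*} [NormedAddCommGroup H] [InnerProductSpace ℂ H]
    (L : Set (Submodule ℂ H)) : Prop where
  isClosed : ∀ E ∈ L, IsClosed (E : Set H)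
  bot_mem : ⊥ ∈ L
  top_mem : ⊤ ∈ L
  sInf_mem : ∀ S : Set (Submodule ℂ H), S ⊆ L → sInf S ∈ L
  join_mem : ∀ S : Set (Submodule ℂ H), S ⊆ L → closedJoin S ∈ L

/-- `M₋`: the join of all members of `L` that do not contain `M`. -/
def minus {H : Type*} [NormedAddCommGroup H] [InnerProductSpace ℂ H]
    (L : Set (Submodule ℂ H)) (M : Submodule ℂ H) : Submodule ℂ H :=
  closedJoin {E | E ∈ L ∧ ¬ M ≤ E}

open Classical in
/-- The orthogonal projection of `H` onto a closed subspace `E`, as an operator on `H`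
(junk value `0` if `E` is not closed). -/
def projOf {H : Type*} [NormedAddCommGroup H] [InnerProductSpace ℂ H] [CompleteSpace H]
    (E : Submodule ℂ H) : H →L[ℂ] H :=
  if h : IsClosed (E : Set H) then
    haveI : CompleteSpace E := h.completeSpace_coe
    E.subtypeL.comp (Submodule.orthogonalProjectionOnto E)
  else 0

/-- A commutative subspace lattice: the orthogonal projections onto members commute. -/
structure IsCSL {H : Type*} [NormedAddCommGroup H] [InnerProductSpace ℂ H] [CompleteSpace H]
    (L : Set (Submodule ℂ H)) extends IsSubspaceLattice L : Prop where
  commutes : ∀ E ∈ L, ∀ F ∈ L, projOf E * projOf F = projOf F * projOf E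

/-- Complete distributivity of the lattice `L` (meets are intersections, joins are
closed linear spans). -/
def IsCompletelyDistributive {H : Type*} [NormedAddCommGroup H] [InnerProductSpace ℂ H]
    (L : Set (Submodule ℂ H)) : Prop :=
  ∀ (I : Type) (J : I → Type) (E : (i : I) → J i → Submodule ℂ H),
    (∀ i j, E i j ∈ L) →
     ((⨅ i, closedJoin (Set.range (E i)))
        = closedJoin (Set.range fun φ : (∀ i, J i) => ⨅ i, E i (φ i)))
    ∧ (closedJoin (Set.range fun i => ⨅ j, E i j)
        = ⨅ φ : (∀ i, J i), closedJoin (Set.range fun i => E i (φ i)))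

/-- `Alg L`: all bounded operators leaving every member of `L` invariant. -/
def algL {H : Type*} [NormedAddCommGroup H] [InnerProductSpace ℂ H]
    (L : Set (Submodule ℂ H)) : Set (H →L[ℂ] H) :=
  {T | ∀ E ∈ L, ∀ x ∈ E, T x ∈ E}

/-- The rank one operator `x ⊗ f* : h ↦ ⟨h, f⟩ x`. -/
def rankOne {H : Type*} [NormedAddCommGroup H] [InnerProductSpace ℂ H]
    (x f : H) : H →L[ℂ] H :=
  (innerSL ℂ f).smulRight x

/-- The rank of a bounded operator: the dimension of its range. -/
def opRank {H : Type*} [NormedAddCommGroup H] [InnerProductSpace ℂ H]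
    (T : H →L[ℂ] H) : Cardinal :=
  Module.rank ℂ (LinearMap.range (T : H →ₗ[ℂ] H))

/-- `Φ` is a linear map of `Alg L` into itself. -/
structure IsLinearOnAlg {H : Type*} [NormedAddCommGroup H] [InnerProductSpace ℂ H]
    (L : Set (Submodule ℂ H)) (Φ : (H →L[ℂ] H) → (H →L[ℂ] H)) : Prop where
  maps : ∀ A ∈ algL L, Φ A ∈ algL L
  map_add : ∀ A ∈ algL L, ∀ B ∈ algL L, Φ (A + B) = Φ A + Φ B
  map_smul : ∀ (c : ℂ), ∀ A ∈ algL L, Φ (c • A) = c • Φ A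

/-- `Φ` preserves the rank of every finite rank operator in `Alg L`. -/
def RankPreserving {H : Type*} [NormedAddCommGroup H] [InnerProductSpace ℂ H]
    (L : Set (Submodule ℂ H)) (Φ : (H →L[ℂ] H) → (H →L[ℂ] H)) : Prop :=
  ∀ A ∈ algL L, opRank A < Cardinal.aleph0 → opRank (Φ A) = opRank A

/-- `a ∼ b`: (nonzero) vectors `a` and `b` are linearly dependent. -/
def Dep {H : Type*} [NormedAddCommGroup H] [InnerProductSpace ℂ H] (a b : H) : Prop :=
  ∃ c : ℂ, c ≠ 0 ∧ b = c • a

/-- `N` is consistent with respect to `Φ`. -/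
def Consistent {H : Type*} [NormedAddCommGroup H] [InnerProductSpace ℂ H]
    (L : Set (Submodule ℂ H)) (Φ : (H →L[ℂ] H) → (H →L[ℂ] H))
    (N : Submodule ℂ H) : Prop :=
  N ≠ ⊥ ∧ minus L N ≠ ⊤ ∧
    ∃ (U : N →ₗ[ℂ] H) (V : ((minus L N)ᗮ : Submodule ℂ H) →ₗ[ℂ] H),
      ∀ (x : N) (f : ((minus L N)ᗮ : Submodule ℂ H)),
        Φ (rankOne (x : H) (f : H)) = rankOne (U x) (V f)

/-- `N` is twisted with respect to `Φ`. -/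
def Twisted {H : Type*} [NormedAddCommGroup H] [InnerProductSpace ℂ H]
    (L : Set (Submodule ℂ H)) (Φ : (H →L[ℂ] H) → (H →L[ℂ] H))
    (N : Submodule ℂ H) : Prop :=
  N ≠ ⊥ ∧ minus L N ≠ ⊤ ∧
    ∃ (U : ((minus L N)ᗮ : Submodule ℂ H) →ₗ⋆[ℂ] H) (V : N →ₗ⋆[ℂ] H),
      ∀ (x : N) (f : ((minus L N)ᗮ : Submodule ℂ H)),
        Φ (rankOne (x : H) (f : H)) = rankOne (U f) (V x)

/-- `N` is isolated: `dim N = 1` and `N^⊥ ∈ L`. -/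
def Isolated {H : Type*} [NormedAddCommGroup H] [InnerProductSpace ℂ H]
    (L : Set (Submodule ℂ H)) (N : Submodule ℂ H) : Prop :=
  Module.rank ℂ N = 1 ∧ Nᗮ ∈ L

/-- The family `F` of all `N ∈ L` with `N ≠ {0}` and `N₋ ≠ H`. -/
def famF {H : Type*} [NormedAddCommGroup H] [InnerProductSpace ℂ H]
    (L : Set (Submodule ℂ H)) : Set (Submodule ℂ H) :=
  {N | N ∈ L ∧ N ≠ ⊥ ∧ minus L N ≠ ⊤}

/-- Subspaces are comparable if one contains the other. -/
def Comparable' {H : Type*} [NormedAddCommGroup H] [InnerProductSpace ℂ H]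
    (M N : Submodule ℂ H) : Prop :=
  M ≤ N ∨ N ≤ M

/-- There is a chain in `F` from `M` to `N`. -/
def ChainConn {H : Type*} [NormedAddCommGroup H] [InnerProductSpace ℂ H]
    (L : Set (Submodule ℂ H)) (M N : Submodule ℂ H) : Prop :=
  ∃ (n : ℕ) (c : Fin (n + 1) → Submodule ℂ H),
    (∀ k, c k ∈ famF L) ∧ c 0 = M ∧ c (Fin.last n) = N ∧
      ∀ k : Fin n, Comparable' (c k.castSucc) (c k.succ)

/-- `𝔊_N`: all members of `F` that can be connected to `N` by a chain. -/
def GSet {H : Type*} [NormedAddCommGroup H] [InnerProductSpace ℂ H]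
    (L : Set (Submodule ℂ H)) (N : Submodule ℂ H) : Set (Submodule ℂ H) :=
  {M | M ∈ famF L ∧ ChainConn L N M}

end


section aux
variable {H : Type*} [NormedAddCommGroup H] [InnerProductSpace ℂ H]

lemma rankOne_apply (x f h : H) : rankOne x f h = ⟪f, h⟫_ℂ • x := by
  simp [rankOne]

lemma rankOne_add_left (x y f : H) : rankOne (x + y) f = rankOne x f + rankOne y f := by
  ext h; simp [rankOne_apply]

lemma rankOne_add_right (x f g : H) : rankOne x (f + g) = rankOne x f + rankOne x g := by
  ext h; simp [rankOne_apply, add_smul]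

lemma rankOne_smul_left (c : ℂ) (x f : H) : rankOne (c • x) f = c • rankOne x f := by
  ext h; simp [rankOne_apply, smul_comm c]

lemma rankOne_smul_right (c : ℂ) (x f : H) :
    rankOne x (c • f) = (starRingEnd ℂ c) • rankOne x f := by
  ext h; simp [rankOne_apply, smul_smul, mul_comm]

lemma rankOne_zero_left (f : H) : rankOne 0 f = 0 := by
  ext h; simp [rankOne_apply]

lemma rankOne_zero_right (x : H) : rankOne x 0 = 0 := by
  ext h; simp [rankOne_apply]

lemma rankOne_eq_zero {x f : H} (h : rankOne x f = 0) : x = 0 ∨ f = 0 := by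
  have := congrArg (fun T : H →L[ℂ] H => T f) h
  simp [rankOne_apply] at this
  tauto

/-- rank at most one -/
def IsR1 (T : H →L[ℂ] H) : Prop := ∃ u v : H, T = rankOne u v

/-- collinearity consequence of equal nonzero rank ones -/
lemma rankOne_eq {a b c d : H} (h : rankOne a b = rankOne c d) (hb : b ≠ 0) :
    ∃ t : ℂ, a = t • c := by
  have := congrArg (fun T : H →L[ℂ] H => T b) h
  simp only [rankOne_apply] at this
  have hbb : ⟪b, b⟫_ℂ ≠ 0 := by simpa using hb
  refine ⟨(⟪b, b⟫_ℂ)⁻¹ * ⟪d, b⟫_ℂ, ?_⟩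
  rw [mul_smul, ← this, smul_smul, inv_mul_cancel₀ hbb, one_smul]

lemma rankOne_eq' {a b c d : H} (h : rankOne a b = rankOne c d) (ha : a ≠ 0) :
    ∃ t : ℂ, b = t • d := by
  have haa : ⟪a, a⟫_ℂ ≠ 0 := by simpa using ha
  refine ⟨starRingEnd ℂ ((⟪a, a⟫_ℂ)⁻¹ * ⟪a, c⟫_ℂ), ?_⟩
  apply ext_inner_right ℂ
  intro k
  have := congrArg (fun T : H →L[ℂ] H => ⟪a, T k⟫_ℂ) h
  simp only [rankOne_apply, inner_smul_right] at this
  rw [inner_smul_left, Complex.conj_conj]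
  field_simp
  rw [this]; ring

lemma exists_sep {b d : H} (h : ∀ t : ℂ, d ≠ t • b) : ∃ k : H, ⟪b, k⟫_ℂ = 0 ∧ ⟪d, k⟫_ℂ ≠ 0 := by
  by_contra! hc
  have : d ∈ (ℂ ∙ b)ᗮᗮ := by
    rw [Submodule.mem_orthogonal']
    intro u hu
    exact hc u (Submodule.mem_orthogonal_singleton_iff_inner_right.1 hu)
  rw [Submodule.orthogonal_orthogonal, Submodule.mem_span_singleton] at this
  obtain ⟨t, ht⟩ := this
  exact h t ht.symm

lemma isR1_add {a b c d : H} (h : IsR1 (rankOne a b + rankOne c d)) (ha : a ≠ 0) (hb : b ≠ 0) :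
    (∃ t : ℂ, c = t • a) ∨ (∃ t : ℂ, d = t • b) := by
  by_contra! hcon
  obtain ⟨hc, hd⟩ := hcon
  obtain ⟨u, v, h⟩ := h
  obtain ⟨k, hk1, hk2⟩ := exists_sep hd
  have hd' : ∀ t : ℂ, b ≠ t • d := by
    intro t ht
    have ht0 : t ≠ 0 := by rintro rfl; simp at ht; exact hb ht
    apply hd t⁻¹
    rw [ht, smul_smul, inv_mul_cancel₀ ht0, one_smul]
  obtain ⟨l, hl1, hl2⟩ := exists_sep hd'
  have e1 := congrArg (fun T : H →L[ℂ] H => T k) h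
  have e2 := congrArg (fun T : H →L[ℂ] H => T l) h
  simp [rankOne_apply, hk1, hl1] at e1 e2
  have hv : ⟪v, l⟫_ℂ ≠ 0 := by
    intro hv
    rw [hv, zero_smul] at e2
    exact (smul_ne_zero hl2 ha) e2
  apply hc ((⟪d, k⟫_ℂ)⁻¹ * ⟪v, k⟫_ℂ * ((⟪v, l⟫_ℂ)⁻¹ * ⟪b, l⟫_ℂ))
  rw [mul_smul, mul_smul, mul_smul, e2, smul_smul (⟪v, l⟫_ℂ)⁻¹, inv_mul_cancel₀ hv, one_smul, ← e1,
    smul_smul, inv_mul_cancel₀ hk2, one_smul]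

lemma isR1_RR {u c u' d : H} (a b : H) (h : rankOne u c = rankOne u' d) (h0 : rankOne u c ≠ 0) :
    IsR1 (rankOne u a + rankOne u' b) := by
  have hd : d ≠ 0 := by rintro rfl; rw [h, rankOne_zero_right] at h0; exact h0 rfl
  obtain ⟨t, rfl⟩ := rankOne_eq h.symm hd
  refine ⟨u, a + (starRingEnd ℂ t) • b, ?_⟩
  rw [rankOne_add_right, rankOne_smul_right, rankOne_smul_left, Complex.conj_conj]

lemma isR1_CC {c v d v' : H} (a b : H) (h : rankOne c v = rankOne d v') (h0 : rankOne c v ≠ 0) :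
    IsR1 (rankOne a v + rankOne b v') := by
  have hd : d ≠ 0 := by rintro rfl; rw [h, rankOne_zero_left] at h0; exact h0 rfl
  obtain ⟨t, rfl⟩ := rankOne_eq' h.symm hd
  refine ⟨a + (starRingEnd ℂ t) • b, v, ?_⟩
  rw [rankOne_add_left, rankOne_smul_right, rankOne_smul_left]

/-- common range / common functional dichotomy -/
lemma dichotomy {Z : Type*} [Add Z] (T : Z → H →L[ℂ] H) (hadd : ∀ a b, T (a + b) = T a + T b)
    (h1 : ∀ z, IsR1 (T z)) :
    (∃ u, ∀ z, ∃ v, T z = rankOne u v) ∨ (∃ v, ∀ z, ∃ u, T z = rankOne u v) := by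
  by_cases h0 : ∀ z, T z = 0
  · exact Or.inl ⟨0, fun z => ⟨0, by rw [h0, rankOne_zero_left]⟩⟩
  push Not at h0
  obtain ⟨z0, hz0⟩ := h0
  obtain ⟨u0, v0, e0⟩ := h1 z0
  have hu0 : u0 ≠ 0 := by rintro rfl; rw [rankOne_zero_left] at e0; exact hz0 e0
  have hv0 : v0 ≠ 0 := by rintro rfl; rw [rankOne_zero_right] at e0; exact hz0 e0
  have key : ∀ z u v, T z = rankOne u v → (∃ t : ℂ, u = t • u0) ∨ (∃ t : ℂ, v = t • v0) := by
    intro z u v e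
    refine isR1_add ?_ hu0 hv0
    rw [← e0, ← e, ← hadd]
    exact h1 _
  by_contra! hcon
  obtain ⟨z1, hz1⟩ := hcon.1 u0
  obtain ⟨z2, hz2⟩ := hcon.2 v0
  obtain ⟨u1, v1, e1⟩ := h1 z1
  obtain ⟨u2, v2, e2⟩ := h1 z2
  have n1 : ∀ t : ℂ, u1 ≠ t • u0 := by
    rintro t rfl
    apply hz1 ((starRingEnd ℂ t) • v1)
    rw [e1, rankOne_smul_left, rankOne_smul_right, Complex.conj_conj]
  have n2 : ∀ t : ℂ, v2 ≠ t • v0 := by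
    rintro t rfl
    apply hz2 ((starRingEnd ℂ t) • u2)
    rw [e2, rankOne_smul_left, rankOne_smul_right]
  obtain ⟨s, rfl⟩ := (key z1 u1 v1 e1).resolve_left (fun ⟨t, ht⟩ => n1 t ht)
  obtain ⟨r, rfl⟩ := (key z2 u2 v2 e2).resolve_right (fun ⟨t, ht⟩ => n2 t ht)
  have hs : s ≠ 0 := by
    rintro rfl
    apply hz1 0
    rw [e1, zero_smul, rankOne_zero_right, rankOne_zero_right]
  have hr : r ≠ 0 := by
    rintro rfl
    apply hz2 0
    rw [e2, zero_smul, rankOne_zero_left, rankOne_zero_left]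
  have := h1 (z2 + z1)
  rw [hadd, e1, e2] at this
  have hv2 : v2 ≠ 0 := by simpa using n2 0
  rcases isR1_add this (smul_ne_zero hr hu0) hv2 with ⟨t, ht⟩ | ⟨t, ht⟩
  · exact n1 (t * r) (by rw [ht, smul_smul])
  · have ht0 : t ≠ 0 := by
      rintro rfl
      rw [zero_smul] at ht
      exact smul_ne_zero hs hv0 ht
    apply n2 (t⁻¹ * s)
    rw [mul_smul, ht, smul_smul, inv_mul_cancel₀ ht0, one_smul]

end aux
section aux2
variable {H : Type*} [NormedAddCommGroup H] [InnerProductSpace ℂ H]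

lemma rankOne_inj_left {a b v : H} (h : rankOne a v = rankOne b v) (hv : v ≠ 0) : a = b := by
  have := congrArg (fun T : H →L[ℂ] H => T v) h
  simp only [rankOne_apply] at this
  have hbb : ⟪v, v⟫_ℂ ≠ 0 := by simpa using hv
  exact smul_right_injective _ hbb this

lemma rankOne_inj_right {a b u : H} (h : rankOne u a = rankOne u b) (hu : u ≠ 0) : a = b := by
  apply ext_inner_right ℂ
  intro k
  have := congrArg (fun T : H →L[ℂ] H => T k) h
  simp only [rankOne_apply] at this
  exact smul_left_injective _ hu this

variable {X Y : Type*} [AddCommGroup X] [Module ℂ X] [AddCommGroup Y] [Module ℂ Y]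

/-- factorisation of a biadditive map through rank ones -/
def SForm (σ τ : ℂ → ℂ) (B : X → Y → H →L[ℂ] H) : Prop :=
  ∃ (U : X → H) (V : Y → H), (∀ a b, U (a + b) = U a + U b) ∧ (∀ c a, U (c • a) = σ c • U a) ∧
    (∀ a b, V (a + b) = V a + V b) ∧ (∀ c a, V (c • a) = (starRingEnd ℂ (τ c)) • V a) ∧
    ∀ x f, B x f = rankOne (U x) (V f)

/-- hypotheses on the map -/
structure SHyp (σ τ : ℂ → ℂ) (B : X → Y → H →L[ℂ] H) : Prop where
  add1 : ∀ a b f, B (a + b) f = B a f + B b f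
  add2 : ∀ x f g, B x (f + g) = B x f + B x g
  smul1 : ∀ c x f, B (c • x) f = σ c • B x f
  smul2 : ∀ c x f, B x (c • f) = τ c • B x f
  surj1 : Function.Surjective σ
  surj2 : Function.Surjective τ
  r1 : ∀ x f, IsR1 (B x f)
  inj : ∀ x f, B x f = 0 → x = 0 ∨ f = 0
  r2 : ∀ x0 x1 f0 f1, IsR1 (B x0 f0 + B x1 f1) → x0 ≠ 0 → f0 ≠ 0 →
    (∃ t : ℂ, x1 = t • x0) ∨ (∃ t : ℂ, f1 = t • f0)

lemma SHyp.swap {σ τ : ℂ → ℂ} {B : X → Y → H →L[ℂ] H} (h : SHyp σ τ B) :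
    SHyp τ σ (fun f x => B x f) where
  add1 := fun a b f => h.add2 f a b
  add2 := fun x f g => h.add1 f g x
  smul1 := fun c x f => h.smul2 c f x
  smul2 := fun c x f => h.smul1 c f x
  surj1 := h.surj2
  surj2 := h.surj1
  r1 := fun x f => h.r1 f x
  inj := fun x f e => (h.inj f x e).symm
  r2 := fun x0 x1 f0 f1 e h1 h2 => (h.r2 f0 f1 x0 x1 e h2 h1).symm

lemma SHyp.zero1 {σ τ : ℂ → ℂ} {B : X → Y → H →L[ℂ] H} (h : SHyp σ τ B) (f : Y) : B 0 f = 0 := by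
  have := h.add1 0 0 f
  simpa using this

lemma SHyp.zero2 {σ τ : ℂ → ℂ} {B : X → Y → H →L[ℂ] H} (h : SHyp σ τ B) (x : X) : B x 0 = 0 := by
  have := h.add2 x 0 0
  simpa using this

lemma SHyp.col {σ τ : ℂ → ℂ} {B : X → Y → H →L[ℂ] H} (h : SHyp σ τ B) {x x0 : X} {f : Y} {s : ℂ}
    (hf : f ≠ 0) (e : B x f = s • B x0 f) : ∃ s', σ s' = s ∧ x = s' • x0 := by
  obtain ⟨s', hs⟩ := h.surj1 s
  refine ⟨s', hs, ?_⟩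
  have h1 : B (x - s' • x0) f = 0 := by
    have := h.add1 (x - s' • x0) (s' • x0) f
    rw [sub_add_cancel, h.smul1, hs, e] at this
    simpa using this
  exact sub_eq_zero.1 ((h.inj _ _ h1).resolve_right hf)

lemma sform_of {σ τ : ℂ → ℂ} {B : X → Y → H →L[ℂ] H} (h : SHyp σ τ B)
    (hC : ∀ f, ∃ v, ∀ x, ∃ u, B x f = rankOne u v)
    (hR : ∀ x, ∃ u, ∀ f, ∃ v, B x f = rankOne u v)
    {x0 : X} {f0 : Y} (hx0 : x0 ≠ 0) (hf0 : f0 ≠ 0) : SForm σ τ B := by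
  have h00 : B x0 f0 ≠ 0 := fun e => (h.inj _ _ e).elim hx0 hf0
  obtain ⟨v, hv⟩ := hC f0
  choose U hU using hv
  have hv0 : v ≠ 0 := by rintro rfl; rw [hU, rankOne_zero_right] at h00; exact h00 rfl
  have hU0 : U x0 ≠ 0 := by intro e; rw [hU, e, rankOne_zero_left] at h00; exact h00 rfl
  have hRx : ∀ x, U x ≠ 0 → ∀ f, ∃ w, B x f = rankOne (U x) w := by
    intro x hx f
    obtain ⟨u, hu⟩ := hR x
    obtain ⟨w0, hw0⟩ := hu f0
    obtain ⟨w, hw⟩ := hu f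
    have e : rankOne u w0 = rankOne (U x) v := by rw [← hw0, ← hU]
    have hw00 : w0 ≠ 0 := by
      rintro rfl
      rw [rankOne_zero_right] at e
      exact (rankOne_eq_zero e.symm).elim hx hv0
    obtain ⟨t, rfl⟩ := rankOne_eq e hw00
    refine ⟨(starRingEnd ℂ t) • w, ?_⟩
    rw [hw, rankOne_smul_left, rankOne_smul_right, Complex.conj_conj]
  choose V hV using hRx x0 hU0
  have Uadd : ∀ a b, U (a + b) = U a + U b := by
    intro a b
    apply rankOne_inj_left _ hv0
    rw [rankOne_add_left, ← hU, ← hU, ← hU, h.add1]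
  have Usmul : ∀ c a, U (c • a) = σ c • U a := by
    intro a b
    apply rankOne_inj_left _ hv0
    rw [rankOne_smul_left, ← hU, ← hU, h.smul1]
  have Vadd : ∀ a b, V (a + b) = V a + V b := by
    intro a b
    apply rankOne_inj_right _ hU0
    rw [rankOne_add_right, ← hV, ← hV, ← hV, h.add2]
  have Vsmul : ∀ c a, V (c • a) = (starRingEnd ℂ (τ c)) • V a := by
    intro a b
    apply rankOne_inj_right _ hU0
    rw [rankOne_smul_right, ← hV, ← hV, h.smul2, Complex.conj_conj]
  refine ⟨U, V, Uadd, Usmul, Vadd, Vsmul, ?_⟩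
  intro x f
  by_cases hs : ∃ s : ℂ, U x = s • U x0
  · obtain ⟨s, hs⟩ := hs
    obtain ⟨s', hs', rfl⟩ := h.col (s := s) (x := x) (x0 := x0) hf0
      (by rw [hU, hs, rankOne_smul_left, ← hU])
    rw [h.smul1, hV, hs, rankOne_smul_left, hs']
  by_cases hf : f = 0
  · subst hf
    have : V 0 = 0 := by have := Vadd 0 0; simpa using this
    rw [h.zero2, this, rankOne_zero_right]
  have hVf : V f ≠ 0 := by
    intro e
    have : B x0 f = 0 := by rw [hV, e, rankOne_zero_right]
    exact (h.inj _ _ this).elim hx0 hf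
  have key : ∀ x, U x ≠ 0 → ∃ c : ℂ, B x f = rankOne (c • U x) (V f) := by
    intro x hx
    obtain ⟨w, hw⟩ := hC f
    obtain ⟨a, ha⟩ := hw x
    obtain ⟨b, hb⟩ := hw x0
    obtain ⟨d, hd⟩ := hRx x hx f
    rw [hV] at hb
    obtain ⟨t, ht⟩ := rankOne_eq' hb.symm (by
      rintro rfl
      rw [rankOne_zero_left] at hb
      exact (rankOne_eq_zero hb).elim hU0 hVf)
    rw [ht, rankOne_smul_right, ← rankOne_smul_left] at ha
    obtain ⟨c, hc⟩ := rankOne_eq (ha.symm.trans hd) hVf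
    exact ⟨c, by rw [ha, hc]⟩
  have hx : U x ≠ 0 := fun e => hs ⟨0, by simp [e]⟩
  have hx' : U (x + x0) ≠ 0 := by
    intro e
    rw [Uadd] at e
    exact hs ⟨-1, by simpa using eq_neg_of_add_eq_zero_left e⟩
  obtain ⟨c, hc⟩ := key x hx
  obtain ⟨c', hc'⟩ := key _ hx'
  rw [h.add1, hc, hV, Uadd, ← rankOne_add_left] at hc'
  have e := rankOne_inj_left hc' hVf
  have e2 : (c - c') • U x = (c' - 1) • U x0 := by
    rw [sub_smul, sub_smul, one_smul, sub_eq_sub_iff_add_eq_add, e, smul_add, add_comm]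
  have hcc : c - c' = 0 := by
    by_contra hne
    apply hs
    refine ⟨(c - c')⁻¹ * (c' - 1), ?_⟩
    rw [mul_smul, ← e2, smul_smul, inv_mul_cancel₀ hne, one_smul]
  rw [hcc, zero_smul] at e2
  have hc1 : c' - 1 = 0 := (smul_eq_zero.1 e2.symm).resolve_right hU0
  have : c = 1 := by linear_combination hcc + hc1
  rw [hc, this, one_smul]

lemma sform_dim1 {σ τ : ℂ → ℂ} {B : X → Y → H →L[ℂ] H} (h : SHyp σ τ B)
    {x0 : X} {f0 : Y} (hx0 : x0 ≠ 0) (hf0 : f0 ≠ 0) (hY : ∀ f, ∃ t : ℂ, f = t • f0) :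
    SForm σ τ B ∨ SForm τ σ (fun f x => B x f) := by
  rcases dichotomy (fun x => B x f0) (fun a b => h.add1 a b f0) (fun x => h.r1 x f0) with
    ⟨u, hu⟩ | ⟨v, hv⟩
  · right
    refine sform_of h.swap ?_ ?_ hf0 hx0
    · intro x
      obtain ⟨w, hw⟩ := hu x
      refine ⟨w, fun f => ?_⟩
      obtain ⟨t, rfl⟩ := hY f
      exact ⟨τ t • u, by rw [h.smul2, hw, rankOne_smul_left]⟩
    · intro f
      obtain ⟨t, rfl⟩ := hY f
      refine ⟨τ t • u, fun x => ?_⟩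
      obtain ⟨w, hw⟩ := hu x
      exact ⟨w, by rw [h.smul2, hw, rankOne_smul_left]⟩
  · left
    refine sform_of h ?_ ?_ hx0 hf0
    · intro f
      obtain ⟨t, rfl⟩ := hY f
      refine ⟨v, fun x => ?_⟩
      obtain ⟨w, hw⟩ := hv x
      exact ⟨τ t • w, by rw [h.smul2, hw, rankOne_smul_left]⟩
    · intro x
      obtain ⟨w, hw⟩ := hv x
      refine ⟨w, fun f => ?_⟩
      obtain ⟨t, rfl⟩ := hY f
      refine ⟨(starRingEnd ℂ (τ t)) • v, ?_⟩
      rw [h.smul2, hw, rankOne_smul_right, Complex.conj_conj]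

lemma sform_dim2 {σ τ : ℂ → ℂ} {B : X → Y → H →L[ℂ] H} (h : SHyp σ τ B)
    {x0 : X} {f0 : Y} (hx0 : x0 ≠ 0) (hf0 : f0 ≠ 0)
    (hY : ∀ f0 : Y, ∃ f, ∀ t : ℂ, f ≠ t • f0) (hX : ∀ f0 : X, ∃ f, ∀ t : ℂ, f ≠ t • f0)
    (hR0 : ∃ u, ∀ f, ∃ v, B x0 f = rankOne u v) :
    SForm σ τ B := by
  have hC : ∀ f, ∃ v, ∀ x, ∃ u, B x f = rankOne u v := by
    intro f
    by_cases hf : f = 0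
    · subst hf
      exact ⟨0, fun x => ⟨0, by rw [h.zero2, rankOne_zero_left]⟩⟩
    rcases dichotomy (fun x => B x f) (fun a b => h.add1 a b f) (fun x => h.r1 x f) with
      ⟨u', hu'⟩ | hv
    · exfalso
      obtain ⟨x1, hx1⟩ := hX x0
      obtain ⟨f1, hf1⟩ := hY f
      obtain ⟨u, hu⟩ := hR0
      obtain ⟨c, hc⟩ := hu f
      obtain ⟨d, hd⟩ := hu' x0
      obtain ⟨a, ha⟩ := hu f1
      obtain ⟨b, hb⟩ := hu' x1
      have := isR1_RR a b (hc.symm.trans hd) (by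
        rw [← hc]; exact fun e => (h.inj _ _ e).elim hx0 hf)
      rw [← ha, ← hb, add_comm] at this
      have hx1' : x1 ≠ 0 := by simpa using hx1 0
      rcases h.r2 x1 x0 f f1 this hx1' hf with ⟨t, ht⟩ | ⟨t, ht⟩
      · have ht0 : t ≠ 0 := by rintro rfl; exact hx0 (by simpa using ht)
        exact hx1 t⁻¹ (by rw [ht, smul_smul, inv_mul_cancel₀ ht0, one_smul])
      · exact hf1 t ht
    · exact hv
  refine sform_of h hC ?_ hx0 hf0
  intro x
  by_cases hx : x = 0
  · subst hx
    exact ⟨0, fun x => ⟨0, by rw [h.zero1, rankOne_zero_left]⟩⟩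
  rcases dichotomy (fun f => B x f) (fun a b => h.add2 x a b) (fun f => h.r1 x f) with
      hu | ⟨v', hv'⟩
  · exact hu
  · exfalso
    obtain ⟨x1, hx1⟩ := hX x
    obtain ⟨f1, hf1⟩ := hY f0
    obtain ⟨v, hv⟩ := hC f0
    obtain ⟨c, hc⟩ := hv x
    obtain ⟨d, hd⟩ := hv' f0
    obtain ⟨a, ha⟩ := hv x1
    obtain ⟨b, hb⟩ := hv' f1
    have := isR1_CC a b (hc.symm.trans hd) (by
      rw [← hc]; exact fun e => (h.inj _ _ e).elim hx hf0)
    rw [← ha, ← hb] at this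
    have hx1' : x1 ≠ 0 := by simpa using hx1 0
    rcases h.r2 x1 x f0 f1 this hx1' hf0 with ⟨t, ht⟩ | ⟨t, ht⟩
    · have ht0 : t ≠ 0 := by rintro rfl; exact hx (by simpa using ht)
      exact hx1 t⁻¹ (by rw [ht, smul_smul, inv_mul_cancel₀ ht0, one_smul])
    · exact hf1 t ht

lemma sform_main {σ τ : ℂ → ℂ} {B : X → Y → H →L[ℂ] H} (h : SHyp σ τ B)
    {x0 : X} {f0 : Y} (hx0 : x0 ≠ 0) (hf0 : f0 ≠ 0) :
    SForm σ τ B ∨ SForm τ σ (fun f x => B x f) := by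
  by_cases hY : ∃ f0 : Y, ∀ f, ∃ t : ℂ, f = t • f0
  · obtain ⟨f1, hf1⟩ := hY
    have : f1 ≠ 0 := by
      rintro rfl
      obtain ⟨t, ht⟩ := hf1 f0
      exact hf0 (by simpa using ht)
    exact sform_dim1 h hx0 this hf1
  by_cases hX : ∃ f0 : X, ∀ f, ∃ t : ℂ, f = t • f0
  · obtain ⟨x1, hx1⟩ := hX
    have : x1 ≠ 0 := by
      rintro rfl
      obtain ⟨t, ht⟩ := hx1 x0
      exact hx0 (by simpa using ht)
    exact (sform_dim1 h.swap hf0 this hx1).symm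
  push Not at hX hY
  rcases dichotomy (fun f => B x0 f) (fun a b => h.add2 x0 a b) (fun f => h.r1 x0 f) with hR | hC
  · exact Or.inl (sform_dim2 h hx0 hf0 hY hX hR)
  rcases dichotomy (fun x => B x f0) (fun a b => h.add1 a b f0) (fun x => h.r1 x f0) with hR' | hC'
  · exact Or.inr (sform_dim2 h.swap hf0 hx0 hX hY hR')
  · exfalso
    obtain ⟨x1, hx1⟩ := hX x0
    obtain ⟨f1, hf1⟩ := hY f0
    obtain ⟨v, hv⟩ := hC'
    obtain ⟨v', hv'⟩ := hC
    obtain ⟨c, hc⟩ := hv x0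
    obtain ⟨d, hd⟩ := hv' f0
    obtain ⟨a, ha⟩ := hv x1
    obtain ⟨b, hb⟩ := hv' f1
    have := isR1_CC a b (hc.symm.trans hd) (by
      rw [← hc]; exact fun e => (h.inj _ _ e).elim hx0 hf0)
    rw [← ha, ← hb] at this
    have hx1' : x1 ≠ 0 := by simpa using hx1 0
    rcases h.r2 x1 x0 f0 f1 this hx1' hf0 with ⟨t, ht⟩ | ⟨t, ht⟩
    · have ht0 : t ≠ 0 := by rintro rfl; exact hx0 (by simpa using ht)
      exact hx1 t⁻¹ (by rw [ht, smul_smul, inv_mul_cancel₀ ht0, one_smul])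
    · exact hf1 t ht

end aux2
section aux3
variable {H : Type*} [NormedAddCommGroup H] [InnerProductSpace ℂ H]

lemma opRank_finite_add (a b c d : H) :
    opRank (rankOne a b + rankOne c d) < Cardinal.aleph0 := by
  have : LinearMap.range ((rankOne a b + rankOne c d : H →L[ℂ] H) : H →ₗ[ℂ] H)
      ≤ Submodule.span ℂ {a, c} := by
    rintro _ ⟨h, rfl⟩
    rw [Submodule.mem_span_pair]
    exact ⟨⟪b, h⟫_ℂ, ⟪d, h⟫_ℂ, by simp [rankOne_apply]⟩
  unfold opRank
  refine lt_of_le_of_lt (Submodule.rank_mono this) ?_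
  have : Module.Finite ℂ (Submodule.span ℂ ({a, c} : Set H)) :=
    Module.Finite.span_of_finite ℂ (by simp)
  exact Module.rank_lt_aleph0 _ _

lemma opRank_finite (a b : H) : opRank (rankOne a b) < Cardinal.aleph0 := by
  have := opRank_finite_add a b 0 0
  rwa [rankOne_zero_left, add_zero] at this

lemma isR1_iff [CompleteSpace H] (T : H →L[ℂ] H) : IsR1 T ↔ opRank T ≤ 1 := by
  unfold opRank
  rw [rank_submodule_le_one_iff']
  constructor
  · rintro ⟨u, v, rfl⟩
    refine ⟨u, ?_⟩
    rintro _ ⟨h, rfl⟩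
    rw [Submodule.mem_span_singleton]
    exact ⟨⟪v, h⟫_ℂ, by simp [rankOne_apply]⟩
  · rintro ⟨u, hu⟩
    by_cases hu0 : u = 0
    · refine ⟨0, 0, ?_⟩
      rw [rankOne_zero_left]
      ext h
      have := hu (LinearMap.mem_range_self (T : H →ₗ[ℂ] H) h)
      rw [hu0] at this
      simpa using this
    refine ⟨u, (starRingEnd ℂ (⟪u, u⟫_ℂ)⁻¹) • ContinuousLinearMap.adjoint T u, ?_⟩
    have huu : ⟪u, u⟫_ℂ ≠ 0 := by simpa using hu0
    ext h
    have := hu (LinearMap.mem_range_self (T : H →ₗ[ℂ] H) h)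
    rw [Submodule.mem_span_singleton] at this
    obtain ⟨c, hc⟩ := this
    have hc' : T h = c • u := hc.symm
    rw [rankOne_apply, inner_smul_left, Complex.conj_conj, ContinuousLinearMap.adjoint_inner_left,
      hc', inner_smul_right]
    congr 1
    field_simp

lemma opRank_zero_iff (T : H →L[ℂ] H) : opRank T = 0 ↔ T = 0 := by
  unfold opRank
  rw [Submodule.rank_eq_zero, LinearMap.range_eq_bot]
  constructor
  · intro h
    ext x
    exact congrArg (fun S : H →ₗ[ℂ] H => S x) h
  · rintro rfl
    rfl

variable {L : Set (Submodule ℂ H)}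

lemma adj_rankOne [CompleteSpace H] (u v : H) :
    ContinuousLinearMap.adjoint (rankOne u v) = rankOne v u := by
  symm
  rw [ContinuousLinearMap.eq_adjoint_iff]
  intro x y
  simp only [rankOne_apply, inner_smul_left, inner_smul_right, inner_conj_symm]
  ring

lemma isR1_adj [CompleteSpace H] {T : H →L[ℂ] H} (h : IsR1 T) :
    IsR1 (ContinuousLinearMap.adjoint T) := by
  obtain ⟨u, v, rfl⟩ := h
  exact ⟨v, u, adj_rankOne u v⟩

/-- abstract properties of `Φ` (and of its adjoint) used below -/
structure PHyp (L : Set (Submodule ℂ H)) (σ : ℂ → ℂ) (Ψ : (H →L[ℂ] H) → (H →L[ℂ] H)) : Prop where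
  add : ∀ A ∈ algL L, ∀ B ∈ algL L, Ψ (A + B) = Ψ A + Ψ B
  smul : ∀ (c : ℂ), ∀ A ∈ algL L, Ψ (c • A) = σ c • Ψ A
  surj : Function.Surjective σ
  r1 : ∀ A ∈ algL L, opRank A < Cardinal.aleph0 → (IsR1 (Ψ A) ↔ IsR1 A)
  zero : ∀ A ∈ algL L, opRank A < Cardinal.aleph0 → Ψ A = 0 → A = 0

lemma pHyp_of [CompleteSpace H] {Φ : (H →L[ℂ] H) → (H →L[ℂ] H)} (hlin : IsLinearOnAlg L Φ)
    (hrank : RankPreserving L Φ) : PHyp L id Φ where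
  add := hlin.map_add
  smul := hlin.map_smul
  surj := Function.surjective_id
  r1 := fun A hA hf => by rw [isR1_iff, isR1_iff, hrank A hA hf]
  zero := fun A hA hf h => by rw [← opRank_zero_iff, ← hrank A hA hf, h, opRank_zero_iff]

lemma pHyp_adj [CompleteSpace H] {Φ : (H →L[ℂ] H) → (H →L[ℂ] H)} (h : PHyp L id Φ) :
    PHyp L (starRingEnd ℂ) (fun A => ContinuousLinearMap.adjoint (Φ A)) where
  add := fun A hA B hB => by rw [h.add A hA B hB, map_add]
  smul := fun c A hA => by
    rw [h.smul c A hA]; exact map_smulₛₗ _ _ _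
  surj := fun c => ⟨starRingEnd ℂ c, Complex.conj_conj c⟩
  r1 := fun A hA hf => by
    rw [← h.r1 A hA hf]
    refine ⟨fun e => ?_, isR1_adj⟩
    have := isR1_adj e
    rwa [ContinuousLinearMap.adjoint_adjoint] at this
  zero := fun A hA hf e => by
    apply h.zero A hA hf
    simpa using e

lemma minus_mono {M N : Submodule ℂ H} (h : M ≤ N) : minus L M ≤ minus L N := by
  apply Submodule.topologicalClosure_mono
  apply sSup_le_sSup
  rintro E ⟨hE, hM⟩
  exact ⟨hE, fun hN => hM (h.trans hN)⟩

lemma le_minus {M E : Submodule ℂ H} (hE : E ∈ L) (h : ¬ M ≤ E) : E ≤ minus L M :=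
  (le_sSup (show E ∈ {E | E ∈ L ∧ ¬ M ≤ E} from ⟨hE, h⟩)).trans
    (Submodule.le_topologicalClosure _)

lemma le_closedJoin {S : Set (Submodule ℂ H)} {E : Submodule ℂ H} (hE : E ∈ S) :
    E ≤ closedJoin S :=
  (le_sSup hE).trans (Submodule.le_topologicalClosure _)

lemma closedJoin_le {S : Set (Submodule ℂ H)} {K : Submodule ℂ H} (hK : IsClosed (K : Set H))
    (h : ∀ E ∈ S, E ≤ K) : closedJoin S ≤ K :=
  Submodule.topologicalClosure_minimal _ (sSup_le h) hK

lemma rankOne_mem {N : Submodule ℂ H} {x f : H} (hx : x ∈ N) (hf : f ∈ (minus L N)ᗮ) :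
    rankOne x f ∈ algL L := by
  intro E hE y hy
  rw [rankOne_apply]
  by_cases h : N ≤ E
  · exact E.smul_mem _ (h hx)
  · have : ⟪f, y⟫_ℂ = 0 := by
      rw [Submodule.mem_orthogonal'] at hf
      exact hf y (le_minus hE h hy)
    rw [this, zero_smul]
    exact E.zero_mem

lemma algL_add {A B : H →L[ℂ] H} (hA : A ∈ algL L) (hB : B ∈ algL L) : A + B ∈ algL L :=
  fun E hE x hx => E.add_mem (hA E hE x hx) (hB E hE x hx)

lemma algL_smul {A : H →L[ℂ] H} (c : ℂ) (hA : A ∈ algL L) : c • A ∈ algL L :=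
  fun E hE x hx => E.smul_mem _ (hA E hE x hx)

lemma PHyp.r2 {σ : ℂ → ℂ} {Ψ : (H →L[ℂ] H) → (H →L[ℂ] H)} (h : PHyp L σ Ψ)
    {a b c d : H} (hab : rankOne a b ∈ algL L) (hcd : rankOne c d ∈ algL L)
    (e : IsR1 (Ψ (rankOne a b) + Ψ (rankOne c d))) (ha : a ≠ 0) (hb : b ≠ 0) :
    (∃ t : ℂ, c = t • a) ∨ (∃ t : ℂ, d = t • b) := by
  rw [← h.add _ hab _ hcd, h.r1 _ (algL_add hab hcd) (opRank_finite_add _ _ _ _)] at e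
  exact isR1_add e ha hb

lemma sHyp_of [CompleteSpace H] {Φ : (H →L[ℂ] H) → (H →L[ℂ] H)} (h : PHyp L id Φ)
    (N : Submodule ℂ H) :
    SHyp id (starRingEnd ℂ) (fun (x : N) (f : ((minus L N)ᗮ : Submodule ℂ H)) =>
      Φ (rankOne (x : H) (f : H))) where
  add1 := fun a b f => by
    rw [← h.add _ (rankOne_mem a.2 f.2) _ (rankOne_mem b.2 f.2), ← rankOne_add_left]; rfl
  add2 := fun x f g => by
    rw [← h.add _ (rankOne_mem x.2 f.2) _ (rankOne_mem x.2 g.2), ← rankOne_add_right]; rfl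
  smul1 := fun c x f => by
    have := h.smul c _ (rankOne_mem x.2 f.2)
    rw [← this, ← rankOne_smul_left]; rfl
  smul2 := fun c x f => by
    have := h.smul (starRingEnd ℂ c) _ (rankOne_mem x.2 f.2)
    rw [id] at this
    rw [← this, ← rankOne_smul_right]; rfl
  surj1 := Function.surjective_id
  surj2 := fun c => ⟨starRingEnd ℂ c, Complex.conj_conj c⟩
  r1 := fun x f => (h.r1 _ (rankOne_mem x.2 f.2) (opRank_finite _ _)).2 ⟨_, _, rfl⟩
  inj := fun x f e => by
    have := rankOne_eq_zero (h.zero _ (rankOne_mem x.2 f.2) (opRank_finite _ _) e)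
    simpa using this
  r2 := fun x0 x1 f0 f1 e hx hf => by
    have := h.r2 (rankOne_mem x0.2 f0.2) (rankOne_mem x1.2 f1.2) e (by simpa using hx)
      (by simpa using hf)
    simpa [Subtype.ext_iff] using this

lemma orth_ne_bot {K : Submodule ℂ H} [CompleteSpace H] (hK : IsClosed (K : Set H)) (h : K ≠ ⊤) :
    Kᗮ ≠ ⊥ := by
  have : CompleteSpace K := hK.completeSpace_coe
  rwa [Ne, Submodule.orthogonal_eq_bot_iff]

lemma minus_closed (N : Submodule ℂ H) : IsClosed (minus L N : Set H) :=
  Submodule.isClosed_topologicalClosure _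

lemma con_or_twi [CompleteSpace H] {Φ : (H →L[ℂ] H) → (H →L[ℂ] H)} (h : PHyp L id Φ)
    {N : Submodule ℂ H} (hN : N ≠ ⊥) (hN' : minus L N ≠ ⊤) :
    Consistent L Φ N ∨ Twisted L Φ N := by
  obtain ⟨x0, hx0, hx0'⟩ := Submodule.exists_mem_ne_zero_of_ne_bot hN
  obtain ⟨f0, hf0, hf0'⟩ := Submodule.exists_mem_ne_zero_of_ne_bot
    (orth_ne_bot (minus_closed N) hN')
  rcases sform_main (sHyp_of h N) (x0 := ⟨x0, hx0⟩) (f0 := ⟨f0, hf0⟩) (by simpa using hx0')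
    (by simpa using hf0') with ⟨U, V, Ua, Us, Va, Vs, e⟩ | ⟨U, V, Ua, Us, Va, Vs, e⟩
  · left
    exact ⟨hN, hN', ⟨⟨U, Ua⟩, Us⟩, ⟨⟨V, Va⟩, fun c a => by simpa using Vs c a⟩, e⟩
  · right
    exact ⟨hN, hN', ⟨⟨U, Ua⟩, Us⟩, ⟨⟨V, Va⟩, fun c a => by simpa using Vs c a⟩, fun x f => e f x⟩

lemma PHyp.colx {σ : ℂ → ℂ} {Ψ : (H →L[ℂ] H) → (H →L[ℂ] H)} (h : PHyp L σ Ψ)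
    {a b c d : H} {s : ℂ} (hab : rankOne a b ∈ algL L) (hcd : rankOne c d ∈ algL L)
    (e : Ψ (rankOne a b) = s • Ψ (rankOne c d)) : ∃ s' : ℂ, rankOne a b = s' • rankOne c d := by
  obtain ⟨s', hs⟩ := h.surj (-s)
  refine ⟨-s', ?_⟩
  have h2 : rankOne a b + s' • rankOne c d = 0 := by
    apply h.zero _ (algL_add hab (algL_smul _ hcd))
    · rw [← rankOne_smul_left]; exact opRank_finite_add _ _ _ _
    · rw [h.add _ hab _ (algL_smul _ hcd), h.smul _ _ hcd, e, hs]; simp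
  rw [neg_smul]
  exact eq_neg_of_add_eq_zero_left h2

lemma cross {σ : ℂ → ℂ} {Ψ : (H →L[ℂ] H) → (H →L[ℂ] H)} (h : PHyp L σ Ψ)
    {M N : Submodule ℂ H} (hMN : M ≤ N) {x0 f0 : H} (hx0 : x0 ∈ M) (hf0 : f0 ∈ (minus L N)ᗮ)
    (hx0' : x0 ≠ 0) (hf0' : f0 ≠ 0) (U V U' V' : H → H)
    (h1 : ∀ x ∈ M, ∀ f ∈ (minus L M)ᗮ, Ψ (rankOne x f) = rankOne (U x) (V f))
    (h2 : ∀ x ∈ N, ∀ f ∈ (minus L N)ᗮ, Ψ (rankOne x f) = rankOne (U' f) (V' x)) :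
    (∀ x ∈ M, ∃ t : ℂ, x = t • x0) ∧ (∀ f ∈ (minus L M)ᗮ, ∃ t : ℂ, f = t • f0) := by
  have hle : (minus L N)ᗮ ≤ (minus L M)ᗮ := Submodule.orthogonal_le (minus_mono hMN)
  have h00 : Ψ (rankOne x0 f0) ≠ 0 := fun e => by
    have := h.zero _ (rankOne_mem hx0 (hle hf0)) (opRank_finite _ _) e
    exact (rankOne_eq_zero this).elim hx0' hf0'
  have e00 := (h1 x0 hx0 f0 (hle hf0)).symm.trans (h2 x0 (hMN hx0) f0 hf0)
  have key : ∀ x1 ∈ N, ∀ f1 ∈ (minus L M)ᗮ, (∃ t : ℂ, x1 = t • x0) ∨ (∃ t : ℂ, f1 = t • f0) := by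
    intro x1 hx1 f1 hf1
    by_cases hx10 : x1 = 0
    · exact Or.inl ⟨0, by simp [hx10]⟩
    have := isR1_RR (V f1) (V' x1) e00 (by rwa [← h1 x0 hx0 f0 (hle hf0)])
    rw [← h1 x0 hx0 f1 hf1, ← h2 x1 hx1 f0 hf0, add_comm] at this
    rcases h.r2 (rankOne_mem hx1 hf0) (rankOne_mem hx0 hf1) this hx10 hf0' with ⟨t, ht⟩ | ht
    · have ht0 : t ≠ 0 := by rintro rfl; exact hx0' (by simpa using ht)
      exact Or.inl ⟨t⁻¹, by rw [ht, smul_smul, inv_mul_cancel₀ ht0, one_smul]⟩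
    · exact Or.inr ht
  have hVf0 : V f0 ≠ 0 := by
    intro e
    rw [h1 x0 hx0 f0 (hle hf0), e, rankOne_zero_right] at h00
    exact h00 rfl
  have hUx0 : U x0 ≠ 0 := by
    intro e
    rw [h1 x0 hx0 f0 (hle hf0), e, rankOne_zero_left] at h00
    exact h00 rfl
  -- collinearity along M
  have colM : ∀ x ∈ M, ∃ t : ℂ, x = t • x0 := by
    intro x hx
    obtain ⟨t, ht⟩ := rankOne_eq ((h1 x hx f0 (hle hf0)).symm.trans (h2 x (hMN hx) f0 hf0)) hVf0
    obtain ⟨s, hs⟩ := rankOne_eq e00 hVf0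
    have hs0 : s ≠ 0 := by rintro rfl; exact hUx0 (by simpa using hs)
    obtain ⟨r, hr⟩ := h.colx (s := t * s⁻¹) (rankOne_mem hx (hle hf0)) (rankOne_mem hx0 (hle hf0))
      (by
        rw [h1 x hx f0 (hle hf0), h1 x0 hx0 f0 (hle hf0), ht, hs, ← rankOne_smul_left, smul_smul,
          mul_assoc, inv_mul_cancel₀ hs0, mul_one])
    exact ⟨r, rankOne_inj_left (by rw [hr, rankOne_smul_left]) hf0'⟩
  refine ⟨colM, ?_⟩
  by_contra hcon
  push Not at hcon
  obtain ⟨f1, hf1, hf1'⟩ := hcon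
  have hN : ∀ x1 ∈ N, ∃ t : ℂ, x1 = t • x0 := fun x1 hx1 =>
    (key x1 hx1 f1 hf1).resolve_right (fun ⟨t, ht⟩ => hf1' t ht)
  have hNM : N = M := by
    apply le_antisymm _ hMN
    intro x1 hx1
    obtain ⟨t, rfl⟩ := hN x1 hx1
    exact M.smul_mem _ hx0
  subst hNM
  obtain ⟨t, ht⟩ := rankOne_eq' ((h1 x0 hx0 f1 hf1).symm.trans (h2 x0 hx0 f1 hf1)) hUx0
  obtain ⟨s, hs⟩ := rankOne_eq' e00 hUx0
  have hs0 : s ≠ 0 := by rintro rfl; exact hVf0 (by simpa using hs)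
  obtain ⟨r, hr⟩ := h.colx (s := starRingEnd ℂ (t * s⁻¹)) (rankOne_mem hx0 hf1)
    (rankOne_mem hx0 hf0) (by
        rw [h1 x0 hx0 f1 hf1, h1 x0 hx0 f0 hf0, ht, hs, ← rankOne_smul_right, smul_smul,
          mul_assoc, inv_mul_cancel₀ hs0, mul_one])
  exact hf1' (starRingEnd ℂ r)
    (rankOne_inj_right (by rw [hr, rankOne_smul_right, Complex.conj_conj]) hx0')

end aux3
set_option linter.unusedSectionVars false
section aux4
variable {H : Type*} [NormedAddCommGroup H] [InnerProductSpace ℂ H] {L : Set (Submodule ℂ H)}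

lemma small_L [TopologicalSpace.SeparableSpace H] (hc : ∀ E ∈ L, IsClosed (E : Set H)) :
    Small.{0} L := by
  have : SecondCountableTopology H := UniformSpace.secondCountable_of_separable H
  obtain ⟨b, hb, -, hbasis⟩ := TopologicalSpace.exists_countable_basis H
  have : Countable b := hb
  obtain ⟨e, he⟩ := exists_injective_nat b
  let F : L → Set ℕ := fun E => e '' {B | (B : Set H) ⊆ ((E : Submodule ℂ H) : Set H)ᶜ}
  refine small_of_injective (f := F) ?_
  intro E G h
  have h1 := he.image_injective h
  have : ((E : Submodule ℂ H) : Set H)ᶜ = ((G : Submodule ℂ H) : Set H)ᶜ := by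
    rw [hbasis.open_eq_sUnion' (hc _ E.2).isOpen_compl,
      hbasis.open_eq_sUnion' (hc _ G.2).isOpen_compl]
    congr 1
    ext B
    constructor
    · rintro ⟨hB, hB'⟩
      have : (⟨B, hB⟩ : b) ∈ {B : b | (B : Set H) ⊆ ((E : Submodule ℂ H) : Set H)ᶜ} := hB'
      rw [h1] at this
      exact ⟨hB, this⟩
    · rintro ⟨hB, hB'⟩
      have : (⟨B, hB⟩ : b) ∈ {B : b | (B : Set H) ⊆ ((G : Submodule ℂ H) : Set H)ᶜ} := hB'
      rw [← h1] at this
      exact ⟨hB, this⟩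
  exact Subtype.ext (SetLike.coe_injective (compl_injective this))

lemma cd_join [TopologicalSpace.SeparableSpace H] (hL : IsSubspaceLattice L)
    (hcd : IsCompletelyDistributive L) (E : Submodule ℂ H) (hE : E ∈ L) :
    E ≤ closedJoin {N | N ∈ L ∧ N ≤ E ∧ ¬ E ≤ minus L N} := by
  have := small_L hL.isClosed
  let g : Shrink.{0} L → Submodule ℂ H := fun s => ((equivShrink L).symm s : Submodule ℂ H)
  have hg : ∀ s, g s ∈ L := fun s => ((equivShrink L).symm s).2
  have hg' : ∀ F ∈ L, ∃ s, g s = F := fun F hF => ⟨equivShrink L ⟨F, hF⟩, by simp [g]⟩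
  have key := (hcd {S : Set (Shrink.{0} L) // E ≤ closedJoin (g '' S)} (fun S => S.1)
    (fun S j => g j.1) (fun S j => hg _)).1
  have h1 : E ≤ ⨅ i : {S : Set (Shrink.{0} L) // E ≤ closedJoin (g '' S)},
      closedJoin (Set.range (fun j : i.1 => g j.1)) := by
    refine le_iInf fun i => ?_
    have := i.2
    rwa [Set.image_eq_range] at this
  rw [key] at h1
  refine h1.trans (closedJoin_le (Submodule.isClosed_topologicalClosure _) ?_)
  rintro _ ⟨φ, rfl⟩
  have hNi : ∀ i : {S : Set (Shrink.{0} L) // E ≤ closedJoin (g '' S)},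
      (⨅ i : {S : Set (Shrink.{0} L) // E ≤ closedJoin (g '' S)}, g (φ i).1) ≤ g (φ i).1 :=
    fun i => iInf_le _ i
  have hNL : (⨅ i : {S : Set (Shrink.{0} L) // E ≤ closedJoin (g '' S)}, g (φ i).1) ∈ L := by
    rw [← sInf_range]
    exact hL.sInf_mem _ (by rintro _ ⟨i, rfl⟩; exact hg _)
  apply le_closedJoin
  change (⨅ i : {S : Set (Shrink.{0} L) // E ≤ closedJoin (g '' S)}, g (φ i).1) ∈ _
  generalize (⨅ i : {S : Set (Shrink.{0} L) // E ≤ closedJoin (g '' S)}, g (φ i).1) = N at *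
  refine ⟨?_, ?_, ?_⟩
  · exact hNL
  · obtain ⟨s, hs⟩ := hg' E hE
    have hs' : E ≤ closedJoin (g '' {s}) := le_closedJoin ⟨s, rfl, hs⟩
    refine (hNi ⟨{s}, hs'⟩).trans ?_
    have := (φ ⟨{s}, hs'⟩).2
    rw [Set.mem_singleton_iff] at this
    rw [this, hs]
  · intro hle
    have himg : g '' {s | ¬ N ≤ g s} = {F | F ∈ L ∧ ¬ N ≤ F} := by
      ext F
      constructor
      · rintro ⟨s, hs, rfl⟩
        exact ⟨hg s, hs⟩
      · rintro ⟨hF, hNF⟩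
        obtain ⟨s, rfl⟩ := hg' F hF
        exact ⟨s, hNF, rfl⟩
    have hle' : E ≤ closedJoin (g '' {s | ¬ N ≤ g s}) := by rw [himg]; exact hle
    exact (φ ⟨_, hle'⟩).2 (hNi ⟨_, hle'⟩)

lemma cd_exists [TopologicalSpace.SeparableSpace H] (hL : IsSubspaceLattice L)
    (hcd : IsCompletelyDistributive L) (E : Submodule ℂ H) (hE : E ∈ L) (h0 : E ≠ ⊥) :
    ∃ N ∈ famF L, N ≤ E := by
  by_contra! hcon
  apply h0
  rw [eq_bot_iff]
  refine (cd_join hL hcd E hE).trans (closedJoin_le (hL.isClosed _ hL.bot_mem) ?_)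
  rintro N ⟨hN, hNE, hm⟩
  by_contra hN0
  refine hcon N ⟨hN, fun e => hN0 e.le, fun e => hm ?_⟩ hNE
  rw [e]; exact le_top

lemma cd_top [TopologicalSpace.SeparableSpace H] (hL : IsSubspaceLattice L)
    (hcd : IsCompletelyDistributive L) : closedJoin (famF L) = ⊤ := by
  rw [eq_top_iff]
  refine (cd_join hL hcd ⊤ hL.top_mem).trans
    (closedJoin_le (Submodule.isClosed_topologicalClosure _) ?_)
  rintro N ⟨hN, -, hm⟩
  by_cases h0 : N = ⊥
  · rw [h0]; exact bot_le
  · exact le_closedJoin ⟨hN, h0, fun e => hm e.ge⟩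

variable [CompleteSpace H]

lemma projOf_eq {E : Submodule ℂ H} (hE : IsClosed (E : Set H)) [E.HasOrthogonalProjection] :
    projOf E = E.starProjection := by
  simp only [projOf, hE, dif_pos]
  rfl

lemma closed_hop {E : Submodule ℂ H} (hE : IsClosed (E : Set H)) : E.HasOrthogonalProjection := by
  have : CompleteSpace E := hE.completeSpace_coe
  infer_instance

lemma orth_of_inf (hL : IsCSL L) {E F : Submodule ℂ H} (hE : E ∈ L) (hF : F ∈ L)
    (h : E ⊓ F = ⊥) : E ≤ Fᗮ := by
  have := closed_hop (hL.isClosed E hE)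
  have := closed_hop (hL.isClosed F hF)
  intro x hx
  have hc := congrArg (fun T : H →L[ℂ] H => T x) (hL.commutes E hE F hF)
  simp only [projOf_eq (hL.isClosed E hE), projOf_eq (hL.isClosed F hF),
    mul_apply_eq_comp] at hc
  rw [Submodule.starProjection_eq_self_iff.2 hx] at hc
  have h1 : F.starProjection x ∈ E ⊓ F :=
    ⟨hc ▸ E.starProjection_apply_mem _, F.starProjection_apply_mem _⟩
  rw [h, Submodule.mem_bot] at h1
  exact (Submodule.starProjection_apply_eq_zero_iff F).1 h1

lemma iso_dich (hL : IsCSL L) {N E : Submodule ℂ H} (hN : N ∈ L) (hE : E ∈ L)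
    (hi : Isolated L N) : N ≤ E ∨ E ≤ Nᗮ := by
  by_cases h : E ⊓ N = ⊥
  · exact Or.inr (orth_of_inf hL hE hN h)
  · left
    obtain ⟨x, hx, hx0⟩ := Submodule.exists_mem_ne_zero_of_ne_bot h
    have hx1 : (⟨x, hx.2⟩ : N) ≠ 0 := by simpa using hx0
    obtain ⟨v, -, hv⟩ := rank_eq_one_iff.1 hi.1
    intro y hy
    obtain ⟨a, ha⟩ := hv ⟨x, hx.2⟩
    obtain ⟨b, hb⟩ := hv ⟨y, hy⟩
    have ha0 : a ≠ 0 := by rintro rfl; exact hx1 (by rw [← ha, zero_smul])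
    have e : (⟨y, hy⟩ : N) = (b * a⁻¹) • ⟨x, hx.2⟩ := by
      rw [← ha, ← hb, smul_smul, mul_assoc, inv_mul_cancel₀ ha0, mul_one]
    have := congrArg Subtype.val e
    simp only [Submodule.coe_smul] at this
    rw [this]
    exact E.smul_mem _ hx.1

lemma iso_ne_bot {N : Submodule ℂ H} (hi : Isolated L N) : N ≠ ⊥ := by
  rintro rfl
  have := hi.1
  simp at this

lemma not_le_orth {N : Submodule ℂ H} (h : N ≠ ⊥) : ¬ N ≤ Nᗮ := by
  intro hle
  apply h
  rw [eq_bot_iff, ← N.inf_orthogonal_eq_bot]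
  exact le_inf le_rfl hle

lemma iso_le {N M : Submodule ℂ H} (hL : IsCSL L) (hN : N ∈ L) (hi : Isolated L N)
    (hM : minus L M ≠ ⊤) (hle : N ≤ M) : M = N := by
  by_contra hne
  apply hM
  have := closed_hop (hL.isClosed N hN)
  rw [eq_top_iff, ← Submodule.sup_orthogonal_of_hasOrthogonalProjection (K := N)]
  refine sup_le (le_minus hN fun h => hne (le_antisymm h hle)) (le_minus hi.2 fun h => ?_)
  exact not_le_orth (iso_ne_bot hi) (hle.trans h)

lemma iso_orth {N M : Submodule ℂ H} (hL : IsCSL L) (hN : N ∈ L) (hi : Isolated L N)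
    (hML : M ∈ L) (hM : minus L M ≠ ⊤) (hni : ¬ Isolated L M) : M ≤ Nᗮ := by
  rcases iso_dich hL hN hML hi with h | h
  · rw [iso_le hL hN hi hM h] at hni
    exact absurd hi hni
  · exact h

lemma minus_mem (hL : IsCSL L) (N : Submodule ℂ H) : minus L N ∈ L :=
  hL.join_mem _ fun _ h => h.1

/-- one dimensional data gives isolated -/
lemma iso_of {N : Submodule ℂ H} (hL : IsCSL L) (hN : N ∈ L) {x0 f0 : H} (hx0 : x0 ∈ N)
    (hx0' : x0 ≠ 0) 
    (h1 : ∀ x ∈ N, ∃ t : ℂ, x = t • x0) (h2 : ∀ f ∈ (minus L N)ᗮ, ∃ t : ℂ, f = t • f0) :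
    Isolated L N := by
  have hm : minus L N ≤ Nᗮ := by
    refine closedJoin_le (Submodule.isClosed_orthogonal _) ?_
    rintro E ⟨hE, hNE⟩
    apply orth_of_inf hL hE hN
    rw [eq_bot_iff]
    rintro y ⟨hyE, hyN⟩
    obtain ⟨t, rfl⟩ := h1 y hyN
    rw [Submodule.mem_bot]
    by_contra h0
    apply hNE
    have ht : t ≠ 0 := by rintro rfl; simp at h0
    intro z hz
    obtain ⟨s, rfl⟩ := h1 z hz
    have := E.smul_mem (s * t⁻¹) hyE
    rwa [smul_smul, mul_assoc, inv_mul_cancel₀ ht, mul_one] at this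
  refine ⟨?_, ?_⟩
  · rw [rank_eq_one_iff]
    refine ⟨⟨x0, hx0⟩, by simpa using hx0', ?_⟩
    rintro ⟨x, hx⟩
    obtain ⟨t, rfl⟩ := h1 x hx
    exact ⟨t, rfl⟩
  · have hx0m : x0 ∈ (minus L N)ᗮ :=
      Submodule.orthogonal_le hm (Submodule.le_orthogonal_orthogonal N hx0)
    have hle : (minus L N)ᗮ ≤ N := by
      intro f hf
      obtain ⟨t, rfl⟩ := h2 f hf
      obtain ⟨s, hs⟩ := h2 x0 hx0m
      have hs0 : s ≠ 0 := by rintro rfl; exact hx0' (by simpa using hs)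
      have := N.smul_mem (t * s⁻¹) hx0
      rwa [hs, smul_smul, mul_assoc, inv_mul_cancel₀ hs0, mul_one] at this
    have := closed_hop (minus_closed (L := L) N)
    have e : Nᗮ = minus L N := by
      apply le_antisymm _ hm
      have := Submodule.orthogonal_le hle
      rwa [Submodule.orthogonal_orthogonal] at this
    rw [e]
    exact minus_mem hL N

lemma ext_fun {K : Submodule ℂ H} (U : K → H) : ∃ U' : H → H, ∀ x (hx : x ∈ K), U' x = U ⟨x, hx⟩ := by
  classical
  exact ⟨fun x => if hx : x ∈ K then U ⟨x, hx⟩ else 0, fun x hx => by simp [hx]⟩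

lemma cross_iso1 (hL : IsCSL L) {Φ : (H →L[ℂ] H) → (H →L[ℂ] H)} (h : PHyp L id Φ)
    {M N : Submodule ℂ H} (hM : M ∈ L) (hMN : M ≤ N) (hc : Consistent L Φ M)
    (ht : Twisted L Φ N) : Isolated L M := by
  obtain ⟨x0, hx0, hx0'⟩ := Submodule.exists_mem_ne_zero_of_ne_bot hc.1
  obtain ⟨f0, hf0, hf0'⟩ := Submodule.exists_mem_ne_zero_of_ne_bot
    (orth_ne_bot (minus_closed N) ht.2.1)
  obtain ⟨-, -, U, V, e⟩ := hc
  obtain ⟨-, -, U', V', e'⟩ := ht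
  obtain ⟨u, hu⟩ := ext_fun U
  obtain ⟨v, hv⟩ := ext_fun V
  obtain ⟨u', hu'⟩ := ext_fun U'
  obtain ⟨v', hv'⟩ := ext_fun V'
  obtain ⟨h1, h2⟩ := cross h hMN hx0 hf0 hx0' hf0' u v u' v'
    (fun x hx f hf => by rw [hu x hx, hv f hf, ← e])
    (fun x hx f hf => by rw [hu' f hf, hv' x hx, ← e'])
  exact iso_of hL hM hx0 hx0' h1 h2

lemma cross_iso2 (hL : IsCSL L) {Φ : (H →L[ℂ] H) → (H →L[ℂ] H)} (h : PHyp L id Φ)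
    {M N : Submodule ℂ H} (hM : M ∈ L) (hMN : M ≤ N) (ht : Twisted L Φ M)
    (hc : Consistent L Φ N) : Isolated L M := by
  obtain ⟨x0, hx0, hx0'⟩ := Submodule.exists_mem_ne_zero_of_ne_bot ht.1
  obtain ⟨f0, hf0, hf0'⟩ := Submodule.exists_mem_ne_zero_of_ne_bot
    (orth_ne_bot (minus_closed N) hc.2.1)
  obtain ⟨-, -, U, V, e⟩ := hc
  obtain ⟨-, -, U', V', e'⟩ := ht
  obtain ⟨u, hu⟩ := ext_fun U
  obtain ⟨v, hv⟩ := ext_fun V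
  obtain ⟨u', hu'⟩ := ext_fun U'
  obtain ⟨v', hv'⟩ := ext_fun V'
  obtain ⟨h1, h2⟩ := cross (pHyp_adj h) hMN hx0 hf0 hx0' hf0' v' u' v u
    (fun x hx f hf => by rw [hu' f hf, hv' x hx, ← adj_rankOne (U' _), ← e'])
    (fun x hx f hf => by rw [hu x hx, hv f hf, ← adj_rankOne (U _), ← e])
  exact iso_of hL hM hx0 hx0' h1 h2

lemma con_twi_orth [TopologicalSpace.SeparableSpace H] (hL : IsCSL L)
    (hcd : IsCompletelyDistributive L) {Φ : (H →L[ℂ] H) → (H →L[ℂ] H)} (h : PHyp L id Φ)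
    {M N : Submodule ℂ H} (hM : M ∈ L) (hN : N ∈ L) (ht : Twisted L Φ M)
    (hc : Consistent L Φ N) (hMi : ¬ Isolated L M) (hNi : ¬ Isolated L N) : M ≤ Nᗮ := by
  apply orth_of_inf hL hM hN
  by_contra h0
  obtain ⟨K, ⟨hK, hK0, hK1⟩, hle⟩ := cd_exists hL.toIsSubspaceLattice hcd (M ⊓ N) (by
    rw [← sInf_pair]; exact hL.sInf_mem _ (by
      intro E hE
      rcases hE with rfl | rfl
      · exact hM
      · exact hN)) h0
  rcases con_or_twi h hK0 hK1 with hc' | ht'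
  · have hi := cross_iso1 hL h hK (hle.trans inf_le_left) hc' ht
    rw [iso_le hL hK hi ht.2.1 (hle.trans inf_le_left)] at hMi
    exact hMi hi
  · have hi := cross_iso2 hL h hK (hle.trans inf_le_right) ht' hc
    rw [iso_le hL hK hi hc.2.1 (hle.trans inf_le_right)] at hNi
    exact hNi hi

lemma orth_symm {A B : Submodule ℂ H} (h : A ≤ Bᗮ) : B ≤ Aᗮ :=
  (Submodule.le_orthogonal_orthogonal B).trans (Submodule.orthogonal_le h)

lemma join_orth {S T : Set (Submodule ℂ H)} (h : ∀ A ∈ S, ∀ B ∈ T, A ≤ Bᗮ) :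
    closedJoin S ≤ (closedJoin T)ᗮ := by
  refine closedJoin_le (Submodule.isClosed_orthogonal _) fun A hA => ?_
  apply orth_symm
  exact closedJoin_le (Submodule.isClosed_orthogonal _) fun B hB => orth_symm (h A hA B hB)

lemma closed_sup {A B : Submodule ℂ H} (hA : IsClosed (A : Set H)) (hB : IsClosed (B : Set H))
    (h : A ≤ Bᗮ) : IsClosed ((A ⊔ B : Submodule ℂ H) : Set H) := by
  have := closed_hop hA
  have := closed_hop hB
  have : A ⊔ B = (Aᗮ ⊓ Bᗮ)ᗮ := by
    apply le_antisymm
    · exact sup_le (orth_symm inf_le_left) (orth_symm inf_le_right)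
    · intro x hx
      have hy : x - A.starProjection x - B.starProjection x ∈ Aᗮ ⊓ Bᗮ := by
        constructor
        · refine Submodule.sub_mem _ (Submodule.sub_starProjection_mem_orthogonal x) ?_
          exact orth_symm h (B.starProjection_apply_mem _)
        · rw [sub_right_comm]
          refine Submodule.sub_mem _ (Submodule.sub_starProjection_mem_orthogonal x) ?_
          exact h (A.starProjection_apply_mem _)
      have hs : A.starProjection x + B.starProjection x ∈ A ⊔ B :=
        Submodule.add_mem_sup (A.starProjection_apply_mem _) (B.starProjection_apply_mem _)
      have hs' : A.starProjection x + B.starProjection x ∈ (Aᗮ ⊓ Bᗮ)ᗮ :=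
        (sup_le (orth_symm inf_le_left) (orth_symm inf_le_right) : A ⊔ B ≤ (Aᗮ ⊓ Bᗮ)ᗮ) hs
      have hy' := Submodule.sub_mem _ hx hs'
      rw [← sub_sub] at hy'
      have h0 : x - A.starProjection x - B.starProjection x = 0 := by
        have : x - A.starProjection x - B.starProjection x ∈ (Aᗮ ⊓ Bᗮ) ⊓ (Aᗮ ⊓ Bᗮ)ᗮ := ⟨hy, hy'⟩
        rwa [Submodule.inf_orthogonal_eq_bot, Submodule.mem_bot] at this
      rw [sub_sub, sub_eq_zero] at h0
      rw [h0]; exact hs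
  rw [this]
  exact Submodule.isClosed_orthogonal _

lemma inf_orth_eq {S : Set (Submodule ℂ H)} {I C : Submodule ℂ H} (hI : IsClosed (I : Set H))
    (hC : IsClosed (C : Set H)) (hCI : C ≤ Iᗮ) (hCS : C ≤ closedJoin S)
    (hS : ∀ E ∈ S, E ≤ I ∨ E ≤ C) : closedJoin S ⊓ Iᗮ = C := by
  apply le_antisymm _ (le_inf hCS hCI)
  have h1 : closedJoin S ≤ C ⊔ I := closedJoin_le (closed_sup hC hI hCI) fun E hE =>
    (hS E hE).elim (fun h => h.trans le_sup_right) (fun h => h.trans le_sup_left)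
  rintro x ⟨hx, hxI⟩
  obtain ⟨c, hc, i, hi, rfl⟩ := Submodule.mem_sup.1 (h1 hx)
  have : i ∈ I ⊓ Iᗮ := ⟨hi, by have := Submodule.sub_mem _ hxI (hCI hc); simpa using this⟩
  rw [Submodule.inf_orthogonal_eq_bot, Submodule.mem_bot] at this
  rw [this, add_zero]
  exact hc

/-- orthogonal complement of a summand -/
lemma orth_summand {A B : Submodule ℂ H} (h : B ≤ Aᗮ) (ht : A ⊔ B = ⊤) : Aᗮ = B := by
  apply le_antisymm _ h
  intro x hx
  have : x ∈ A ⊔ B := by rw [ht]; trivial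
  obtain ⟨a, ha, b, hb, rfl⟩ := Submodule.mem_sup.1 this
  have : a ∈ A ⊓ Aᗮ := ⟨ha, by have := Submodule.sub_mem _ hx (h hb); simpa using this⟩
  rw [Submodule.inf_orthogonal_eq_bot, Submodule.mem_bot] at this
  rw [this, zero_add]
  exact hb

lemma sup_mem (hL : IsCSL L) {A B : Submodule ℂ H} (hA : A ∈ L) (hB : B ∈ L) (h : A ≤ Bᗮ) :
    A ⊔ B ∈ L := by
  have := hL.join_mem {A, B} (by rintro E (rfl | rfl) <;> assumption)
  rw [closedJoin, sSup_pair, IsClosed.submodule_topologicalClosure_eq] at this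
  · exact this
  · exact closed_sup (hL.isClosed _ hA) (hL.isClosed _ hB) h

end aux4
theorem stmt_9 {H : Type*} [NormedAddCommGroup H] [InnerProductSpace ℂ H]
    [CompleteSpace H] [TopologicalSpace.SeparableSpace H]
    (L : Set (Submodule ℂ H)) (hL : IsCSL L) (hcd : IsCompletelyDistributive L)
    (Φ : (H →L[ℂ] H) → (H →L[ℂ] H)) (hlin : IsLinearOnAlg L Φ)
    (hrank : RankPreserving L Φ)
    (Mi Mc Mt : Submodule ℂ H)
    (hMi : Mi = closedJoin {E | E ∈ L ∧ Isolated L E})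
    (hMc : Mc = closedJoin {E | E ∈ L ∧ Consistent L Φ E} ⊓ Miᗮ)
    (hMt : Mt = closedJoin {E | E ∈ L ∧ Twisted L Φ E} ⊓ Miᗮ) :
    (IsClosed (Mi : Set H) ∧ IsClosed (Mc : Set H) ∧ IsClosed (Mt : Set H)) ∧
    (Mc ≤ Miᗮ ∧ Mt ≤ Miᗮ ∧ Mt ≤ Mcᗮ) ∧
    (Mi ⊔ Mc ⊔ Mt = ⊤) ∧
    (Mi ∈ L ∧ Mc ∈ L ∧ Mt ∈ L ∧ Miᗮ ∈ L ∧ Mcᗮ ∈ L ∧ Mtᗮ ∈ L) ∧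
    (∀ A ∈ algL L,
      A = projOf Mi * A * projOf Mi + projOf Mc * A * projOf Mc
            + projOf Mt * A * projOf Mt) := by
  have hP := pHyp_of hlin hrank
  set C := closedJoin {E | E ∈ L ∧ Consistent L Φ E ∧ ¬ Isolated L E} with hCdef
  set T := closedJoin {E | E ∈ L ∧ Twisted L Φ E ∧ ¬ Isolated L E} with hTdef
  have cI : IsClosed (Mi : Set H) := by rw [hMi]; exact Submodule.isClosed_topologicalClosure _
  have cC : IsClosed (C : Set H) := Submodule.isClosed_topologicalClosure _
  have cT : IsClosed (T : Set H) := Submodule.isClosed_topologicalClosure _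
  have mI : Mi ∈ L := by rw [hMi]; exact hL.join_mem _ fun E h => h.1
  have mC : C ∈ L := hL.join_mem _ fun E h => h.1
  have mT : T ∈ L := hL.join_mem _ fun E h => h.1
  have oC : C ≤ Miᗮ := by
    rw [hMi]
    exact join_orth fun A hA B hB => iso_orth hL hB.1 hB.2 hA.1 hA.2.1.2.1 hA.2.2
  have oT : T ≤ Miᗮ := by
    rw [hMi]
    exact join_orth fun A hA B hB => iso_orth hL hB.1 hB.2 hA.1 hA.2.1.2.1 hA.2.2
  have oTC : T ≤ Cᗮ := join_orth fun A hA B hB =>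
    con_twi_orth hL hcd hP hA.1 hB.1 hA.2.1 hB.2.1 hA.2.2 hB.2.2
  have eC : Mc = C := by
    rw [hMc]
    refine inf_orth_eq cI cC oC ?_ ?_
    · exact Submodule.topologicalClosure_mono (sSup_le_sSup fun E h => ⟨h.1, h.2.1⟩)
    · rintro E ⟨hE, hE'⟩
      by_cases hi : Isolated L E
      · left; rw [hMi]; exact le_closedJoin ⟨hE, hi⟩
      · right; exact le_closedJoin ⟨hE, hE', hi⟩
  have eT : Mt = T := by
    rw [hMt]
    refine inf_orth_eq cI cT oT ?_ ?_
    · exact Submodule.topologicalClosure_mono (sSup_le_sSup fun E h => ⟨h.1, h.2.1⟩)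
    · rintro E ⟨hE, hE'⟩
      by_cases hi : Isolated L E
      · left; rw [hMi]; exact le_closedJoin ⟨hE, hi⟩
      · right; exact le_closedJoin ⟨hE, hE', hi⟩
  clear hMc hMt
  rw [eC, eT]
  have mIC : Mi ⊔ C ∈ L := sup_mem hL mI mC (orth_symm oC)
  have mIT : Mi ⊔ T ∈ L := sup_mem hL mI mT (orth_symm oT)
  have mCT : C ⊔ T ∈ L := sup_mem hL mC mT (orth_symm oTC)
  have oT' : T ≤ (Mi ⊔ C)ᗮ := by
    rw [← Submodule.inf_orthogonal]; exact le_inf oT oTC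
  have htop : Mi ⊔ C ⊔ T = ⊤ := by
    rw [eq_top_iff, ← cd_top hL.toIsSubspaceLattice hcd]
    refine closedJoin_le (hL.isClosed _ (sup_mem hL mIC mT (orth_symm oT'))) ?_
    rintro E ⟨hE, hE0, hE1⟩
    by_cases hi : Isolated L E
    · refine le_trans ?_ (le_sup_left.trans le_sup_left)
      rw [hMi]; exact le_closedJoin ⟨hE, hi⟩
    rcases con_or_twi hP hE0 hE1 with h | h
    · have hle : E ≤ C := le_closedJoin ⟨hE, h, hi⟩
      exact hle.trans (le_sup_right.trans le_sup_left)
    · have hle : E ≤ T := le_closedJoin ⟨hE, h, hi⟩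
      exact hle.trans le_sup_right
  have e1 : Miᗮ = C ⊔ T := orth_summand (sup_le oC oT) (by rw [← sup_assoc, htop])
  have e2 : Cᗮ = Mi ⊔ T := orth_summand (sup_le (orth_symm oC) oTC)
    (by rw [← sup_assoc, sup_comm C Mi, htop])
  have e3 : Tᗮ = Mi ⊔ C := orth_summand (orth_symm oT') (by rw [sup_comm, htop])
  refine ⟨⟨cI, cC, cT⟩, ⟨oC, oT, oTC⟩, htop, ⟨mI, mC, mT, e1 ▸ mCT, e2 ▸ mIT, e3 ▸ mIC⟩, ?_⟩
  intro A hA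
  have := closed_hop cI
  have := closed_hop cC
  have := closed_hop cT
  rw [projOf_eq cI, projOf_eq cC, projOf_eq cT]
  ext x
  have hx : x ∈ Mi ⊔ C ⊔ T := by rw [htop]; trivial
  obtain ⟨y, hy, t, ht, rfl⟩ := Submodule.mem_sup.1 hx
  obtain ⟨i, hi, c, hc, rfl⟩ := Submodule.mem_sup.1 hy
  have p : ∀ (K : Submodule ℂ H) [K.HasOrthogonalProjection] (v : H), v ∈ K →
      K.starProjection v = v := fun K _ v hv => Submodule.starProjection_eq_self_iff.2 hv
  have q : ∀ (K : Submodule ℂ H) [K.HasOrthogonalProjection] (v : H), v ∈ Kᗮ →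
      K.starProjection v = 0 := fun K _ v hv => (Submodule.starProjection_apply_eq_zero_iff K).2 hv
  simp only [add_apply, mul_apply_eq_comp, map_add]
  rw [p Mi i hi, q Mi c (oC hc), q Mi t (oT ht), q C i (orth_symm oC hi), p C c hc, q C t (oTC ht),
    q T i (orth_symm oT hi), q T c (orth_symm oTC hc), p T t ht]
  simp only [map_zero, add_zero, zero_add]
  rw [p Mi _ (hA Mi mI i hi), p C _ (hA C mC c hc), p T _ (hA T mT t ht)]
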